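/- Let q be a prime power and n a positive integer with gcd(n,q)=1. Let r ≥ 3 and δ ≥ 2 be integers such that (r+δ-1) divides gcd(n, q-1) and gcd(n/(r+δ-1), r+δ-1) divides δ. Then there exists a q-ary cyclic code C of length n, dimension k = rn/(r+δ-1) - 2, and minimum distance d = δ+2, such that C has (r,δ)-locality and d = n - k + 1 - (⌈k/r⌉ - 1)(δ - 1) (i.e., C is an optimal (r,δ)-LRC achieving the Singleton-type bound). -/

import Mathlib

open Polynomial
open scoped Classical

/-- Hamming weight of a vector. -/
noncomputable def wt {F : Type*} [Field F] {n : ℕ} (v : Fin n → F) : ℕ :=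
  (Finset.univ.filter (fun i => v i ≠ 0)).card

/-- The minimum distance of the code `Cset` is at least `d`. -/
def MinDistGe {F : Type*} [Field F] {n : ℕ} (Cset : Set (Fin n → F)) (d : ℕ) : Prop :=
  ∀ v ∈ Cset, v ≠ 0 → d ≤ wt v

/-- The minimum distance of the code `Cset` is exactly `d`. -/
def MinDistIs {F : Type*} [Field F] {n : ℕ} (Cset : Set (Fin n → F)) (d : ℕ) : Prop :=
  MinDistGe Cset d ∧ ∃ v ∈ Cset, v ≠ 0 ∧ wt v = d

/-- The code `Cset` has `(r, δ)`-locality: every coordinate `i` lies in a repair set `R`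
of size at most `r + δ - 1` such that the code punctured to `R` has minimum distance `≥ δ`. -/
def HasLocality {F : Type*} [Field F] {n : ℕ} (Cset : Set (Fin n → F)) (r δ : ℕ) : Prop :=
  ∀ i : Fin n, ∃ R : Finset (Fin n), i ∈ R ∧ R.card ≤ r + δ - 1 ∧
    ∀ v ∈ Cset, (∃ j ∈ R, v j ≠ 0) → δ ≤ (R.filter (fun j => v j ≠ 0)).card

/-- A linear code is cyclic if it is closed under the cyclic shift
`(c_0, ..., c_{n-1}) ↦ (c_{n-1}, c_0, ..., c_{n-2})`. -/
def IsCyclic' {F : Type*} [Field F] {n : ℕ} [NeZero n] (C : Submodule F (Fin n → F)) : Prop :=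
  ∀ v ∈ C, (fun i : Fin n => v (i - 1)) ∈ C

/-- Singleton-type optimality for an `[n,k,d]` `(r,δ)`-LRC:
`d = n - k + 1 - (⌈k/r⌉ - 1)(δ - 1)`. -/
def IsOptimalParams (n k d r δ : ℕ) : Prop :=
  (d : ℤ) = (n : ℤ) - (k : ℤ) + 1 - (⌈(k : ℚ) / (r : ℚ)⌉ - 1) * ((δ : ℤ) - 1)

/-!
Write `m = r + δ - 1` and `n = m * ν`, let `β` be a primitive `m`-th root of unity and choose `γ`
with `γ ^ ν = β ^ δ`, which the gcd condition permits. The code is generated by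
`(X - 1) (X - γ) ∏ (X ^ ν - β ^ a)`, the product being over `1 ≤ a < δ`.

A word of length `n` splits into `ν` words of length `m` by residue class of the coordinate modulo
`ν`, and `X ^ ν - b` divides the polynomial of the word if and only if `b` is a root of each of the
`ν` component polynomials. For a codeword these therefore have the roots `β, …, β ^ (δ - 1)`, so by
the BCH bound a nonzero component has weight at least `δ`: the residue classes are repair sets.
A codeword with two nonzero components has weight at least `2 * δ ≥ δ + 2`. With a single nonzero
component, the roots `1` and `γ` of the codeword turn into the roots `β ^ 0` and `β ^ δ` of that
component, so there are `δ + 1` consecutive roots and the weight is at least `δ + 2`. Equality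
holds because `∏ (X ^ ν - β ^ a)` over `0 ≤ a ≤ δ` is a multiple of the generator with at most
`δ + 2` nonzero coefficients.
-/

section PrimitiveRoots

theorem exists_isPrimitiveRoot_of_dvd_card_sub_one {F : Type*} [Field F] [Fintype F] {m : ℕ}
    (h : m ∣ Fintype.card F - 1) : ∃ β : F, IsPrimitiveRoot β m := by
  obtain ⟨ζ, hζ⟩ := IsCyclic.exists_ofOrder_eq_natCard (α := Fˣ)
  rw [Nat.card_eq_fintype_card, Fintype.card_units] at hζ
  obtain ⟨c, hc⟩ := h
  have hpos : 0 < Fintype.card F - 1 := Nat.sub_pos_of_lt Fintype.one_lt_card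
  exact ⟨_, IsPrimitiveRoot.coe_units_iff.mpr
    ((IsPrimitiveRoot.iff_orderOf.mpr hζ).pow hpos (hc.trans (mul_comm m c)))⟩

theorem exists_pow_eq_pow_of_gcd_dvd {G : Type*} [Group G] {a : G} {m k d : ℕ}
    (ha : a ^ m = 1) (h : Nat.gcd k m ∣ d) : ∃ b : G, b ^ k = a ^ d := by
  obtain ⟨x, y, hxy⟩ := Int.gcd_dvd_iff.mp ((Int.gcd_natCast_natCast k m).symm ▸ h)
  refine ⟨a ^ x, ?_⟩
  calc (a ^ x) ^ k = a ^ (k * x : ℤ) * (a ^ m) ^ y := by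
        rw [ha, one_zpow, mul_one, mul_comm, zpow_mul, zpow_natCast]
    _ = a ^ d := by rw [← zpow_natCast a m, ← zpow_mul, ← zpow_add, ← hxy, zpow_natCast]

theorem prod_X_sub_C_pow_dvd_X_pow_sub_one {R : Type*} [CommRing R] [IsDomain R] {β : R} {m l : ℕ}
    (hβ : IsPrimitiveRoot β m) (hl : l ≤ m) :
    ∏ a ∈ Finset.range l, (X - C (β ^ a)) ∣ X ^ m - 1 := by
  rcases m.eq_zero_or_pos with rfl | hm
  · simp
  have hinj : Set.InjOn (β ^ ·) (Finset.range l) := fun a ha b hb ↦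
    hβ.pow_inj ((Finset.mem_range.mp ha).trans_le hl) ((Finset.mem_range.mp hb).trans_le hl)
  rw [X_pow_sub_one_eq_prod hm hβ, ← Finset.prod_image (f := fun x ↦ X - C x) hinj]
  refine Finset.prod_dvd_prod_of_subset _ _ _ (Finset.image_subset_iff.mpr fun a _ ↦ ?_)
  rw [mem_nthRootsFinset hm, pow_right_comm, hβ.pow_eq_one, one_pow]

end PrimitiveRoots

section WordPolynomial

theorem card_support_expand_le {R : Type*} [CommSemiring R] {ν : ℕ} (hν : ν ≠ 0) (p : R[X]) :
    (expand R ν p).support.card ≤ p.support.card := by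
  refine (Finset.card_le_card fun i hi ↦ ?_).trans
    (Finset.card_image_le (s := p.support) (f := (· * ν)))
  rw [mem_support_iff, coeff_expand (Nat.pos_of_ne_zero hν)] at hi
  split_ifs at hi with hdvd
  · exact Finset.mem_image.mpr ⟨i / ν, mem_support_iff.mpr hi, Nat.div_mul_cancel hdvd⟩
  · exact absurd rfl hi

theorem ofFn_toFn_of_degree_lt {R : Type*} [Semiring R] {n : ℕ} {p : R[X]} (hp : p.degree < n) :
    ofFn n (toFn n p) = p := by
  ext i
  by_cases! hi : i < n
  · simp [hi, toFn]
  · rw [ofFn_coeff_eq_zero_of_ge _ hi,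
      coeff_eq_zero_of_degree_lt (hp.trans_le (Nat.cast_le.mpr hi))]

theorem eval_ofFn {R : Type*} [Semiring R] {n : ℕ} (v : Fin n → R) (x : R) :
    (ofFn n v).eval x = ∑ i, v i * x ^ (i : ℕ) := by
  rw [ofFn_eq_sum_monomial, eval_finsetSum]
  simp only [eval_monomial]

theorem ofFn_shift {R : Type*} [Ring R] {n : ℕ} [NeZero n] (v : Fin n → R) :
    ofFn n (fun i ↦ v (i - 1)) = X * ofFn n v - C (v (-1)) * (X ^ n - 1) := by
  obtain ⟨N, rfl⟩ := Nat.exists_eq_succ_of_ne_zero (NeZero.ne n)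
  have hsucc (i : Fin N) : i.succ - 1 = i.castSucc := by rw [sub_eq_iff_eq_add]; simp
  have hlast : (-1 : Fin (N + 1)) = Fin.last N := neg_eq_of_add_eq_zero_left (Fin.last_add_one N)
  rw [ofFn_eq_sum_monomial, ofFn_eq_sum_monomial, Fin.sum_univ_succ, Fin.sum_univ_castSucc]
  simp only [hsucc, hlast, zero_sub, mul_add, mul_sub, Finset.mul_sum, X_mul_monomial,
    Fin.val_succ, Fin.val_castSucc, Fin.val_last, Fin.val_zero, monomial_zero_left, mul_one,
    C_mul_X_pow_eq_monomial]
  abel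

variable {F : Type*} [Field F] {n : ℕ}

theorem wt_toFn_le_card_support (p : F[X]) : wt (toFn n p) ≤ p.support.card :=
  Finset.card_le_card_of_injOn (fun i ↦ (i : ℕ))
    (fun _ hi ↦ mem_support_iff.mpr (Finset.mem_filter.mp hi).2)
    Fin.val_injective.injOn

/-- The BCH bound: consecutive roots amount to a Vandermonde system satisfied by the nonzero
coordinates of `v`. -/
theorem sub_lt_wt_of_forall_eval_pow_eq_zero {β : F} (hβ : IsPrimitiveRoot β n) {v : Fin n → F}
    (hv : v ≠ 0) {k l : ℕ} (hroot : ∀ a ∈ Finset.Ico k l, (ofFn n v).eval (β ^ a) = 0) :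
    l - k < wt v := by
  by_contra! hle
  let S : Finset (Fin n) := Finset.univ.filter fun i ↦ v i ≠ 0
  let e : Fin (wt v) ≃o S := S.orderIsoOfFin rfl
  obtain ⟨i, hi⟩ := Function.ne_iff.mp hv
  have hβ0 : β ≠ 0 := hβ.ne_zero i.pos.ne'
  have hinj : Function.Injective fun j ↦ β ^ ((e j : Fin n) : ℕ) := fun j j' h ↦
    e.injective (Subtype.ext (Fin.ext (hβ.pow_inj (e j).1.2 (e j').1.2 h)))
  have hzero := Matrix.eq_zero_of_forall_pow_sum_mul_pow_eq_zero
    (v := fun j ↦ v (e j) * (β ^ k) ^ ((e j : Fin n) : ℕ)) hinj fun a ↦ calc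
      ∑ j, v (e j) * (β ^ k) ^ ((e j : Fin n) : ℕ) * (β ^ ((e j : Fin n) : ℕ)) ^ (a : ℕ)
          = ∑ j, v (e j) * (β ^ (k + a)) ^ ((e j : Fin n) : ℕ) :=
        Finset.sum_congr rfl fun j _ ↦ by ring
      _ = ∑ i : S, v i * (β ^ (k + a)) ^ ((i : Fin n) : ℕ) :=
        e.toEquiv.sum_comp fun i ↦ v i * (β ^ (k + a)) ^ ((i : Fin n) : ℕ)
      _ = ∑ i ∈ S, v i * (β ^ (k + a)) ^ (i : ℕ) :=
        S.sum_coe_sort fun i ↦ v i * (β ^ (k + a)) ^ (i : ℕ)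
      _ = ∑ i, v i * (β ^ (k + a)) ^ (i : ℕ) :=
        Finset.sum_filter_of_ne fun i _ ↦ left_ne_zero_of_mul
      _ = 0 := by
        rw [← eval_ofFn]
        exact hroot _ (Finset.mem_Ico.mpr (by omega))
  have hvi := congrFun hzero (e.symm ⟨i, by simpa [S] using hi⟩)
  rw [e.apply_symm_apply] at hvi
  exact hi ((mul_eq_zero.mp hvi).resolve_right (pow_ne_zero _ (pow_ne_zero _ hβ0)))

end WordPolynomial

section PolynomialCode

variable {F : Type*} [Field F] {n : ℕ} {g : F[X]}

/-- The polynomial code of length `n` generated by `g`: the words `v` whose polynomial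
`∑ i, v i * X ^ i` is a multiple of `g`. -/
noncomputable def polyCode (n : ℕ) (g : F[X]) : Submodule F (Fin n → F) :=
  ((Ideal.span {g}).restrictScalars F).comap (ofFn n)

theorem mem_polyCode {v : Fin n → F} : v ∈ polyCode n g ↔ g ∣ ofFn n v := by
  simp [polyCode, Ideal.mem_span_singleton]

theorem isCyclic_polyCode [NeZero n] (hg : g ∣ X ^ n - 1) : IsCyclic' (polyCode n g) := by
  intro v hv
  rw [mem_polyCode] at hv ⊢
  rw [ofFn_shift]
  exact dvd_sub (hv.mul_left _) (hg.mul_left _)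

theorem finrank_polyCode (hg : g ≠ 0) (hn : g.natDegree ≤ n) :
    Module.finrank F (polyCode n g) = n - g.natDegree := by
  let π : (Fin n → F) →ₗ[F] F[X] ⧸ Ideal.span {g} :=
    (Ideal.Quotient.mkₐ F (Ideal.span {g})).toLinearMap ∘ₗ ofFn n
  have hker : LinearMap.ker π = polyCode n g := by
    ext v
    simp [π, mem_polyCode, Ideal.Quotient.eq_zero_iff_dvd]
  have hsurj : Function.Surjective π := by
    intro x
    obtain ⟨p, rfl⟩ := Ideal.Quotient.mk_surjective x
    have hdeg : (p % g).degree < n :=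
      (degree_mod_lt p hg).trans_le (degree_le_of_natDegree_le hn)
    refine ⟨toFn n (p % g), ?_⟩
    change Ideal.Quotient.mk _ (ofFn n (toFn n (p % g))) = _
    rw [ofFn_toFn_of_degree_lt hdeg, Ideal.Quotient.mk_eq_mk_iff_sub_mem,
      Ideal.mem_span_singleton, ← dvd_neg, neg_sub, EuclideanDomain.mod_eq_sub_mul_div,
      sub_sub_cancel]
    exact dvd_mul_right _ _
  have hrank := π.finrank_range_add_finrank_ker
  rw [LinearMap.range_eq_top.mpr hsurj, finrank_top, finrank_quotient_span_eq_natDegree, hker,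
    Module.finrank_fin_fun] at hrank
  omega

end PolynomialCode

section Deinterleaving

/-- The `s`-th of the `ν` words of length `m` interleaved in a word `v` of length `m * ν`: its
`k`-th coordinate is the coordinate `s + ν * k` of `v`. -/
def deinterleave {α : Type*} {m ν : ℕ} (v : Fin (m * ν) → α) (s : Fin ν) : Fin m → α :=
  fun k ↦ v (finProdFinEquiv (k, s))

theorem exists_deinterleave_ne_zero {M : Type*} [Zero M] {m ν : ℕ} {v : Fin (m * ν) → M}
    (hv : v ≠ 0) : ∃ s, deinterleave v s ≠ 0 := by
  obtain ⟨i, hi⟩ := Function.ne_iff.mp hv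
  obtain ⟨⟨k, s⟩, rfl⟩ := finProdFinEquiv.surjective i
  exact ⟨s, Function.ne_iff.mpr ⟨k, hi⟩⟩

section CommSemiring

variable {R : Type*} [CommSemiring R] {m ν : ℕ} (v : Fin (m * ν) → R)

theorem ofFn_eq_sum_deinterleave :
    ofFn (m * ν) v = ∑ s : Fin ν, X ^ (s : ℕ) * expand R ν (ofFn m (deinterleave v s)) := by
  rw [ofFn_eq_sum_monomial, ← finProdFinEquiv.sum_comp, Fintype.sum_prod_type_right]
  simp only [ofFn_eq_sum_monomial, map_sum, Finset.mul_sum, expand_monomial, X_pow_mul_monomial,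
    deinterleave, finProdFinEquiv_apply_val, mul_comm, add_comm]

theorem eval_ofFn_eq_sum_deinterleave (x : R) :
    (ofFn (m * ν) v).eval x =
      ∑ s : Fin ν, x ^ (s : ℕ) * (ofFn m (deinterleave v s)).eval (x ^ ν) := by
  simp only [ofFn_eq_sum_deinterleave, eval_finsetSum, eval_mul, eval_pow, eval_X, expand_eval]

end CommSemiring

section CommRing

variable {R : Type*} [CommRing R] {m ν : ℕ} (v : Fin (m * ν) → R)

theorem X_pow_sub_C_dvd_ofFn_sub_ofFn_eval (b : R) :
    X ^ ν - C b ∣ ofFn (m * ν) v - ofFn ν fun s ↦ (ofFn m (deinterleave v s)).eval b := by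
  rw [ofFn_eq_sum_deinterleave, ofFn_eq_sum_monomial, ← Finset.sum_sub_distrib]
  refine Finset.dvd_sum fun s _ ↦ ?_
  rw [← C_mul_X_pow_eq_monomial, mul_comm (C _), ← mul_sub]
  have := map_dvd (expand R ν) (X_sub_C_dvd_sub_C_eval (p := ofFn m (deinterleave v s)) (a := b))
  simp only [map_sub, expand_X, expand_C] at this
  exact this.mul_left _

theorem X_pow_sub_C_dvd_ofFn_iff (hν : ν ≠ 0) (b : R) :
    X ^ ν - C b ∣ ofFn (m * ν) v ↔ ∀ s, (ofFn m (deinterleave v s)).eval b = 0 := by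
  nontriviality R
  rw [dvd_iff_dvd_of_dvd_sub (X_pow_sub_C_dvd_ofFn_sub_ofFn_eval v b)]
  refine ⟨fun h ↦ congrFun ((map_eq_zero_iff (ofFn ν) (injective_ofFn ν)).mp ?_), fun h ↦ ?_⟩
  · by_contra hne
    refine (monic_X_pow_sub_C b hν).not_dvd_of_degree_lt hne ?_ h
    rw [degree_X_pow_sub_C (Nat.pos_of_ne_zero hν)]
    exact ofFn_degree_lt _
  · simp [h, ← Pi.zero_def]

end CommRing

section Field

variable {F : Type*} [Field F] {m ν : ℕ}

theorem wt_eq_sum_wt_deinterleave (v : Fin (m * ν) → F) : wt v = ∑ s, wt (deinterleave v s) := by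
  simp_rw [wt, Finset.card_filter]
  rw [← finProdFinEquiv.sum_comp, Fintype.sum_prod_type_right]
  rfl

theorem hasLocality_of_le_wt_deinterleave {C : Set (Fin (m * ν) → F)} {r δ : ℕ}
    (hm : m ≤ r + δ - 1)
    (hC : ∀ v ∈ C, ∀ s, deinterleave v s ≠ 0 → δ ≤ wt (deinterleave v s)) :
    HasLocality C r δ := by
  intro i
  obtain ⟨⟨k, s⟩, rfl⟩ := finProdFinEquiv.surjective i
  let ι : Fin m ↪ Fin (m * ν) :=
    ⟨fun k ↦ finProdFinEquiv (k, s), finProdFinEquiv.injective.comp (Prod.mk_left_injective s)⟩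
  refine ⟨Finset.univ.map ι, Finset.mem_map_of_mem ι (Finset.mem_univ k), by simpa, ?_⟩
  rintro v hv ⟨j, hj, hvj⟩
  obtain ⟨l, -, rfl⟩ := Finset.mem_map.mp hj
  rw [Finset.filter_map, Finset.card_map]
  exact hC v hv s (Function.ne_iff.mpr ⟨l, hvj⟩)

end Field

end Deinterleaving

section Generator

variable {F : Type*} [Field F] {m ν δ : ℕ} {β γ : F}

/-- The generator polynomial of the optimal code. The factors `X ^ ν - β ^ a` give locality and
the roots `1` and `γ`, where `γ ^ ν = β ^ δ`, raise the minimum distance from `δ` to `δ + 2`. -/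
noncomputable def lrcGenerator (ν δ : ℕ) (β γ : F) : F[X] :=
  (X - C 1) * (X - C γ) * ∏ a ∈ Finset.Ico 1 δ, (X ^ ν - C (β ^ a))

theorem monic_lrcGenerator (hν : ν ≠ 0) (δ : ℕ) (β γ : F) : (lrcGenerator ν δ β γ).Monic :=
  ((monic_X_sub_C _).mul (monic_X_sub_C _)).mul
    (monic_prod_of_monic _ _ fun _ _ ↦ monic_X_pow_sub_C _ hν)

theorem natDegree_lrcGenerator (hν : ν ≠ 0) (δ : ℕ) (β γ : F) :
    (lrcGenerator ν δ β γ).natDegree = 2 + (δ - 1) * ν := by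
  have hprod := monic_prod_of_monic (Finset.Ico 1 δ) (fun a ↦ X ^ ν - C (β ^ a))
    fun _ _ ↦ monic_X_pow_sub_C _ hν
  rw [lrcGenerator, ((monic_X_sub_C _).mul (monic_X_sub_C _)).natDegree_mul hprod,
    (monic_X_sub_C _).natDegree_mul (monic_X_sub_C _),
    natDegree_prod_of_monic _ _ fun _ _ ↦ monic_X_pow_sub_C _ hν]
  simp only [natDegree_X_sub_C, natDegree_X_pow_sub_C, Finset.sum_const, Nat.card_Ico,
    smul_eq_mul, Nat.reduceAdd]

theorem lrcGenerator_dvd_expand (hδ : 1 ≤ δ) (hγ : γ ^ ν = β ^ δ) :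
    lrcGenerator ν δ β γ ∣ expand F ν (∏ a ∈ Finset.range (δ + 1), (X - C (β ^ a))) := by
  have hone : X - C 1 ∣ X ^ ν - C (β ^ 0) := by rw [dvd_iff_isRoot]; simp
  have hγ' : X - C γ ∣ X ^ ν - C (β ^ δ) := by rw [dvd_iff_isRoot]; simp [hγ]
  have hsplit : expand F ν (∏ a ∈ Finset.range (δ + 1), (X - C (β ^ a))) =
      (X ^ ν - C (β ^ 0)) * (X ^ ν - C (β ^ δ)) * ∏ a ∈ Finset.Ico 1 δ, (X ^ ν - C (β ^ a)) := by
    rw [map_prod, Finset.prod_range_succ, Finset.range_eq_Ico, Finset.prod_eq_prod_Ico_succ_bot hδ]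
    simp only [map_sub, expand_X, expand_C]
    ring
  rw [hsplit]
  exact mul_dvd_mul (mul_dvd_mul hone hγ') dvd_rfl

theorem lrcGenerator_dvd_X_pow_sub_one (hβ : IsPrimitiveRoot β m) (hδ : 1 ≤ δ) (hδm : δ < m)
    (hγ : γ ^ ν = β ^ δ) : lrcGenerator ν δ β γ ∣ X ^ (m * ν) - 1 := by
  have := map_dvd (expand F ν) (prod_X_sub_C_pow_dvd_X_pow_sub_one hβ (Nat.succ_le_of_lt hδm))
  rw [map_sub, map_one, map_pow, expand_X, ← pow_mul, mul_comm] at this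
  exact (lrcGenerator_dvd_expand hδ hγ).trans this

end Generator

section OptimalCode

variable {F : Type*} [Field F] {m ν δ : ℕ} {β γ : F} {v : Fin (m * ν) → F}

theorem finrank_polyCode_lrcGenerator {r : ℕ} (hν : ν ≠ 0) (hr : 2 ≤ r) (hδ : 1 ≤ δ) (β γ : F) :
    Module.finrank F (polyCode ((r + δ - 1) * ν) (lrcGenerator ν δ β γ)) = r * ν - 2 := by
  have hlen : (r + δ - 1) * ν = r * ν + (δ - 1) * ν := by
    rw [← add_mul, Nat.add_sub_assoc (by omega)]
  have hrν : 2 ≤ r * ν := by nlinarith [Nat.pos_of_ne_zero hν]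
  have hdeg := natDegree_lrcGenerator hν δ β γ
  rw [finrank_polyCode (monic_lrcGenerator hν δ β γ).ne_zero] <;> omega

theorem eval_deinterleave_pow_eq_zero_of_mem (hν : ν ≠ 0)
    (hv : v ∈ polyCode (m * ν) (lrcGenerator ν δ β γ)) (s : Fin ν) {a : ℕ}
    (ha : a ∈ Finset.Ico 1 δ) : (ofFn m (deinterleave v s)).eval (β ^ a) = 0 := by
  have hdvd : X ^ ν - C (β ^ a) ∣ lrcGenerator ν δ β γ :=
    (Finset.dvd_prod_of_mem (fun a ↦ X ^ ν - C (β ^ a)) ha).mul_left _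
  exact (X_pow_sub_C_dvd_ofFn_iff v hν _).mp (hdvd.trans (mem_polyCode.mp hv)) s

theorem le_wt_deinterleave_of_mem (hβ : IsPrimitiveRoot β m)
    (hv : v ∈ polyCode (m * ν) (lrcGenerator ν δ β γ)) {s : Fin ν} (hs : deinterleave v s ≠ 0) :
    δ ≤ wt (deinterleave v s) := by
  have := sub_lt_wt_of_forall_eval_pow_eq_zero hβ hs
    fun _ ↦ eval_deinterleave_pow_eq_zero_of_mem s.pos.ne' hv s
  omega

theorem add_two_le_wt_deinterleave_of_mem (hβ : IsPrimitiveRoot β m) (hγ : γ ^ ν = β ^ δ)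
    (hv : v ∈ polyCode (m * ν) (lrcGenerator ν δ β γ)) {s : Fin ν} (hs : deinterleave v s ≠ 0)
    (hsingle : ∀ t ≠ s, deinterleave v t = 0) : δ + 2 ≤ wt (deinterleave v s) := by
  have hν : ν ≠ 0 := s.pos.ne'
  have hm : m ≠ 0 := by rintro rfl; exact hs (Subsingleton.elim _ _)
  have hγ0 : γ ≠ 0 := by
    rintro rfl
    exact pow_ne_zero δ (hβ.ne_zero hm) (hγ.symm.trans (zero_pow hν))
  have hroot {x : F} (hx0 : x ≠ 0) (hx : X - C x ∣ lrcGenerator ν δ β γ) :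
      (ofFn m (deinterleave v s)).eval (x ^ ν) = 0 := by
    have := dvd_iff_isRoot.mp (hx.trans (mem_polyCode.mp hv))
    rw [IsRoot.def, eval_ofFn_eq_sum_deinterleave, Fintype.sum_eq_single s fun t ht ↦ by
      rw [hsingle t ht, map_zero, eval_zero, mul_zero]] at this
    exact (mul_eq_zero.mp this).resolve_left (pow_ne_zero _ hx0)
  refine sub_lt_wt_of_forall_eval_pow_eq_zero (k := 0) (l := δ + 1) hβ hs fun a ha ↦ ?_
  obtain rfl | rfl | ha' : a = 0 ∨ a = δ ∨ a ∈ Finset.Ico 1 δ := by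
    simp only [Finset.mem_Ico] at ha ⊢; omega
  · simpa using hroot one_ne_zero (Dvd.intro _ (mul_assoc _ _ _).symm)
  · exact hγ ▸ hroot hγ0 ((dvd_mul_left _ _).mul_right _)
  · exact eval_deinterleave_pow_eq_zero_of_mem hν hv s ha'

theorem minDistGe_polyCode_lrcGenerator (hδ : 2 ≤ δ) (hβ : IsPrimitiveRoot β m)
    (hγ : γ ^ ν = β ^ δ) :
    MinDistGe (polyCode (m * ν) (lrcGenerator ν δ β γ) : Set (Fin (m * ν) → F)) (δ + 2) := by
  intro v hv hv0
  obtain ⟨s, hs⟩ := exists_deinterleave_ne_zero hv0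
  rw [wt_eq_sum_wt_deinterleave]
  by_cases! hsingle : ∀ t ≠ s, deinterleave v t = 0
  · exact (add_two_le_wt_deinterleave_of_mem hβ hγ hv hs hsingle).trans
      (Finset.single_le_sum (f := fun t ↦ wt (deinterleave v t)) (fun _ _ ↦ Nat.zero_le _)
        (Finset.mem_univ s))
  · obtain ⟨t, hts, ht⟩ := hsingle
    calc δ + 2 ≤ wt (deinterleave v t) + wt (deinterleave v s) := by
          linarith [le_wt_deinterleave_of_mem hβ hv hs, le_wt_deinterleave_of_mem hβ hv ht]
      _ = ∑ u ∈ {t, s}, wt (deinterleave v u) :=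
          (Finset.sum_pair (f := fun u ↦ wt (deinterleave v u)) hts).symm
      _ ≤ ∑ u, wt (deinterleave v u) := Finset.sum_le_sum_of_subset (Finset.subset_univ _)

theorem exists_mem_polyCode_lrcGenerator_wt_le (hν : ν ≠ 0) (hδ : 1 ≤ δ) (hδm : δ + 1 < m)
    (hγ : γ ^ ν = β ^ δ) :
    ∃ v ∈ polyCode (m * ν) (lrcGenerator ν δ β γ), v ≠ 0 ∧ wt v ≤ δ + 2 := by
  set h : F[X] := ∏ a ∈ Finset.range (δ + 1), (X - C (β ^ a))
  have hmonic : h.Monic := monic_prod_X_sub_C _ _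
  have hdeg : h.natDegree = δ + 1 := by
    rw [natDegree_finsetProd_X_sub_C_eq_card, Finset.card_range]
  have hexp : (expand F ν h).degree < (m * ν : ℕ) := by
    refine degree_le_natDegree.trans_lt (Nat.cast_lt.mpr ?_)
    rw [natDegree_expand, hdeg]
    exact Nat.mul_lt_mul_of_pos_right hδm (Nat.pos_of_ne_zero hν)
  have hofFn := ofFn_toFn_of_degree_lt hexp
  refine ⟨toFn (m * ν) (expand F ν h), ?_, fun h0 ↦ ?_, ?_⟩
  · rw [mem_polyCode, hofFn]
    exact lrcGenerator_dvd_expand hδ hγ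
  · rw [h0, map_zero, eq_comm, expand_eq_zero (Nat.pos_of_ne_zero hν)] at hofFn
    exact hmonic.ne_zero hofFn
  · calc wt (toFn (m * ν) (expand F ν h)) ≤ (expand F ν h).support.card :=
          wt_toFn_le_card_support _
      _ ≤ h.support.card := card_support_expand_le hν h
      _ ≤ h.natDegree + 1 := h.card_supp_le_succ_natDegree
      _ = δ + 2 := by rw [hdeg]

theorem minDistIs_polyCode_lrcGenerator (hν : ν ≠ 0) (hδ : 2 ≤ δ) (hδm : δ + 1 < m)
    (hβ : IsPrimitiveRoot β m) (hγ : γ ^ ν = β ^ δ) :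
    MinDistIs (polyCode (m * ν) (lrcGenerator ν δ β γ) : Set (Fin (m * ν) → F)) (δ + 2) := by
  have hge := minDistGe_polyCode_lrcGenerator hδ hβ hγ
  obtain ⟨v, hv, hv0, hle⟩ := exists_mem_polyCode_lrcGenerator_wt_le hν (by omega) hδm hγ
  exact ⟨hge, v, hv, hv0, hle.antisymm (hge v hv hv0)⟩

theorem isOptimalParams_add_two {r : ℕ} (hν : ν ≠ 0) (hr : 3 ≤ r) :
    IsOptimalParams ((r + δ - 1) * ν) (r * ν - 2) (δ + 2) r δ := by
  have hrν : 2 ≤ r * ν := by nlinarith [Nat.pos_of_ne_zero hν]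
  have hr' : (3 : ℚ) ≤ r := by exact_mod_cast hr
  have hceil : ⌈((r * ν - 2 : ℕ) : ℚ) / r⌉ = (ν : ℤ) := by
    rw [Int.ceil_eq_iff, lt_div_iff₀ (by linarith), div_le_iff₀ (by linarith)]
    push_cast [Nat.cast_sub hrν]
    constructor <;> linarith
  rw [IsOptimalParams, hceil]
  push_cast [Nat.cast_sub hrν, Nat.cast_sub (show 1 ≤ r + δ by omega)]
  ring

end OptimalCode

theorem exists_optimal_cyclic_LRC_dist_delta_add_two_general {F : Type*} [Field F] {n r δ : ℕ}
    [NeZero n] {β : F} (hβ : IsPrimitiveRoot β (r + δ - 1)) (hr : 3 ≤ r) (hδ : 2 ≤ δ)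
    (hdvd : (r + δ - 1) ∣ n) (hgcd : Nat.gcd (n / (r + δ - 1)) (r + δ - 1) ∣ δ) :
    ∃ C : Submodule F (Fin n → F),
      IsCyclic' C ∧
      Module.finrank F C = r * n / (r + δ - 1) - 2 ∧
      MinDistIs (C : Set (Fin n → F)) (δ + 2) ∧
      HasLocality (C : Set (Fin n → F)) r δ ∧
      IsOptimalParams n (r * n / (r + δ - 1) - 2) (δ + 2) r δ := by
  have hm : 0 < r + δ - 1 := by omega
  obtain ⟨ν, rfl⟩ := hdvd
  have hν : ν ≠ 0 := right_ne_zero_of_mul (NeZero.ne ((r + δ - 1) * ν))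
  rw [Nat.mul_div_cancel_left _ hm] at hgcd
  rw [mul_left_comm, Nat.mul_div_cancel_left _ hm]
  obtain ⟨γ, hγ⟩ := exists_pow_eq_pow_of_gcd_dvd (hβ.isUnit_unit hm.ne').pow_eq_one hgcd
  replace hγ : (γ : F) ^ ν = β ^ δ := congrArg Units.val hγ
  refine ⟨polyCode _ (lrcGenerator ν δ β γ),
    isCyclic_polyCode (lrcGenerator_dvd_X_pow_sub_one hβ (by omega) (by omega) hγ),
    finrank_polyCode_lrcGenerator hν (by omega) (by omega) β γ,
    minDistIs_polyCode_lrcGenerator hν hδ (by omega) hβ hγ,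
    hasLocality_of_le_wt_deinterleave le_rfl fun v hv s ↦ le_wt_deinterleave_of_mem hβ hv,
    isOptimalParams_add_two hν hr⟩

/-- **Theorem 2 / main result (ii).** If `gcd(n,q) = 1`, `r ≥ 3`, `δ ≥ 2`,
`(r+δ-1) ∣ gcd(n, q-1)` and `gcd(n/(r+δ-1), r+δ-1) ∣ δ`, then there exists a `q`-ary
optimal cyclic `(r,δ)`-LRC of length `n`, dimension `k = rn/(r+δ-1) - 2` and minimum
distance `δ + 2`, achieving the Singleton-type bound. -/
theorem exists_optimal_cyclic_LRC_dist_delta_add_two (F : Type*) [Field F] [Fintype F]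
    (q n r δ : ℕ) (hq : Fintype.card F = q) [NeZero n] (hcop : Nat.Coprime n q)
    (hr : 3 ≤ r) (hδ : 2 ≤ δ) (hdvd : (r + δ - 1) ∣ Nat.gcd n (q - 1))
    (hgcd : Nat.gcd (n / (r + δ - 1)) (r + δ - 1) ∣ δ) :
    ∃ C : Submodule F (Fin n → F),
      IsCyclic' C ∧
      Module.finrank F C = r * n / (r + δ - 1) - 2 ∧
      MinDistIs (C : Set (Fin n → F)) (δ + 2) ∧
      HasLocality (C : Set (Fin n → F)) r δ ∧
      IsOptimalParams n (r * n / (r + δ - 1) - 2) (δ + 2) r δ := by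
  obtain ⟨β, hβ⟩ := exists_isPrimitiveRoot_of_dvd_card_sub_one
    (hq ▸ hdvd.trans (Nat.gcd_dvd_right n (q - 1)))
  exact exists_optimal_cyclic_LRC_dist_delta_add_two_general hβ hr hδ
    (hdvd.trans (Nat.gcd_dvd_left n (q - 1))) hgcd
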